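/- arXiv:2402.19089 — 2 statements merged into one kernel-verified Lean document; each statement's English description precedes it below -/
import Mathlib

section
/- Let 𝒜 be a standardized completely reachable binary circular DFA on ℤ_n, let S be a nonempty proper subset of ℤ_n, and set t = t(S), m = m(S), U_t = δ_a(H_t) \ H_t. Then there exist an H_t-coset C and an element u ∈ U_t such that C ⊆ H_m \ S and C ⊕ u ⊆ H_m ∩ S (where C ⊕ u = {c + u : c ∈ C}). -/
/-!
The theorem rests on two facts.

* The chain `H_i` reaches `⊤` (`exists_Hchain_eq_top`). Otherwise, some proper subgroup `H` is
  mapped into itself by `δa`. Then the family of complements of `H`-cosets is closed under taking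
  predecessors: the complement of a coset other than `H` contains `0`, so it is not an image under
  `δa`; and if `δa '' T = Hᶜ`, then `T ⊆ Hᶜ`, so `T = Hᶜ` by cardinality. Since the full
  state set is not in the family, `Hᶜ` is unreachable, contradicting complete reachability.
  Consequently `m = m(S)` is attained, and `t = t(S)` satisfies `t < m`.

* If no pair `x, u` with `x ∈ H_m \ S`, `u ∈ U_t`, `x + u ∈ S` existed, then `H_m ∩ S`
  would be closed under subtracting elements of `H_t ∪ U_t`, hence under the subgroup `H_{t+1}`
  they generate, contradicting the maximality of `t`. Given such a pair, `C = H_t ⊕ x` works because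
  `H_m ∩ S` is a union of `H_t`-cosets.
-/


/-- The two-letter alphabet of a binary DFA. -/
inductive Letter where
  | a : Letter
  | b : Letter

/-- Left-to-right action of a word on `ZMod n`, where the letter `b` acts as `q ↦ q + 1`
(a cyclic permutation) and the letter `a` acts as the given map `δa`. -/
def act {n : ℕ} (δa : ZMod n → ZMod n) : List Letter → ZMod n → ZMod n
  | [], q => q
  | Letter.a :: w, q => act δa w (δa q)
  | Letter.b :: w, q => act δa w (q + 1)

/-- A binary circular DFA is completely reachable if every nonempty subset of states
is the image of the full state set under the action of some word. -/
def CompletelyReachable {n : ℕ} (δa : ZMod n → ZMod n) : Prop :=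
  ∀ S : Set (ZMod n), S.Nonempty → ∃ w : List Letter, act δa w '' Set.univ = S

/-- A binary circular DFA is standardized if `0` has no `δa`-preimage and `δa 0` is the
unique state with more than one `δa`-preimage. -/
def Standardized {n : ℕ} (δa : ZMod n → ZMod n) : Prop :=
  (∀ q : ZMod n, δa q ≠ 0) ∧
  ∀ p : ZMod n, 1 < {q : ZMod n | δa q = p}.ncard ↔ p = δa 0

/-- The orbit `O(𝒜) = {δa^i(0) : i ≥ 1}`. -/
def orbitSet {n : ℕ} (δa : ZMod n → ZMod n) : Set (ZMod n) :=
  {q : ZMod n | ∃ i : ℕ, 1 ≤ i ∧ δa^[i] 0 = q}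

/-- The orbit subgroup `K(𝒜)`: the subgroup of `(ZMod n, +)` generated by the orbit. -/
def orbitSubgroup {n : ℕ} (δa : ZMod n → ZMod n) : AddSubgroup (ZMod n) :=
  AddSubgroup.closure (orbitSet δa)

/-- The chain of subgroups `H_0 = {0}`, `H_{i+1} = ⟨H_i ∪ (δa(H_i) \ H_i)⟩`. -/
def Hchain {n : ℕ} (δa : ZMod n → ZMod n) : ℕ → AddSubgroup (ZMod n)
  | 0 => ⊥
  | i + 1 =>
      AddSubgroup.closure
        ((Hchain δa i : Set (ZMod n)) ∪
          (δa '' (Hchain δa i : Set (ZMod n)) \ (Hchain δa i : Set (ZMod n))))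

/-- `T` is a union of `H`-cosets iff it is closed under adding elements of `H`. -/
def IsUnionOfCosets {n : ℕ} (H : AddSubgroup (ZMod n)) (T : Set (ZMod n)) : Prop :=
  ∀ x ∈ T, ∀ h ∈ H, x + h ∈ T

/-- `m(S) = min {i : H_i ∩ S ∉ {∅, H_i}}`. -/
noncomputable def mOf {n : ℕ} (δa : ZMod n → ZMod n) (S : Set (ZMod n)) : ℕ :=
  sInf {i : ℕ | ((Hchain δa i : Set (ZMod n)) ∩ S).Nonempty ∧
    (Hchain δa i : Set (ZMod n)) ∩ S ≠ (Hchain δa i : Set (ZMod n))}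

/-- `t(S) = max {i : H_{m(S)} ∩ S is a union of H_i-cosets}`. -/
noncomputable def tOf {n : ℕ} (δa : ZMod n → ZMod n) (S : Set (ZMod n)) : ℕ :=
  sSup {i : ℕ | IsUnionOfCosets (Hchain δa i)
    ((Hchain δa (mOf δa S) : Set (ZMod n)) ∩ S)}

/-- For a subgroup `H` closed under `δa`, any set from which the complement of an `H`-coset is
reached is itself the complement of an `H`-coset. -/
lemma coset_compl_of_act_image {n : ℕ} [NeZero n] (δa : ZMod n → ZMod n)
    (h0 : ∀ q : ZMod n, δa q ≠ 0) (H : AddSubgroup (ZMod n)) (hH : ∀ x ∈ H, δa x ∈ H)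
    (w : List Letter) : ∀ (T : Set (ZMod n)) (c : ZMod n),
      act δa w '' T = {x | x - c ∉ H} → ∃ c' : ZMod n, T = {x | x - c' ∉ H} := by
  induction w with
  | nil =>
    intro T c h
    exact ⟨c, by rw [← h]; ext x; simp [act]⟩
  | cons l w ih =>
    intro T c h
    cases l with
    | a =>
      have h1 : act δa w '' (δa '' T) = {x | x - c ∉ H} := by
        rw [← h, Set.image_image]; rfl
      obtain ⟨c', hc'⟩ := ih _ _ h1
      -- `0` is not in the image of `δa`, so the missing coset is `H` itself
      have hc : c' ∈ H := by
        by_contra hn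
        have : (0 : ZMod n) ∈ δa '' T := by
          rw [hc']; simpa using hn
        obtain ⟨q, -, hq⟩ := this
        exact h0 q hq
      have hT : δa '' T = (H : Set (ZMod n))ᶜ := by
        rw [hc']; ext x
        simp [sub_eq_add_neg, AddSubgroup.add_mem_cancel_right H (neg_mem hc)]
      have hsub : T ⊆ (H : Set (ZMod n))ᶜ := by
        intro x hx hxH
        have : δa x ∈ (H : Set (ZMod n))ᶜ := hT ▸ Set.mem_image_of_mem _ hx
        exact this (hH x hxH)
      have hcard : ((H : Set (ZMod n))ᶜ).ncard ≤ T.ncard := by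
        rw [← hT]; exact Set.ncard_image_le (Set.toFinite _)
      refine ⟨0, ?_⟩
      rw [Set.eq_of_subset_of_ncard_le hsub hcard (Set.toFinite _)]
      ext x; simp
    | b =>
      have h1 : act δa w '' ((fun q => q + 1) '' T) = {x | x - c ∉ H} := by
        rw [← h, Set.image_image]; rfl
      obtain ⟨c', hc'⟩ := ih _ _ h1
      refine ⟨c' - 1, ?_⟩
      ext x
      have h2 : x + 1 ∈ (fun q => q + 1) '' T ↔ x ∈ T := by simp
      rw [← h2, hc']
      have h3 : x + 1 - c' = x - (c' - 1) := by ring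
      simp [h3]

lemma eq_top_of_invariant {n : ℕ} [NeZero n] (δa : ZMod n → ZMod n)
    (h0 : ∀ q : ZMod n, δa q ≠ 0) (hcr : CompletelyReachable δa)
    (H : AddSubgroup (ZMod n)) (hH : ∀ x ∈ H, δa x ∈ H) : H = ⊤ := by
  by_contra hne
  obtain ⟨y, hy⟩ : ∃ y, y ∉ H := by
    by_contra! h
    exact hne ((AddSubgroup.eq_top_iff' H).2 h)
  obtain ⟨w, hw⟩ := hcr {x | x - 0 ∉ H} ⟨y, by simpa using hy⟩
  obtain ⟨c, hc⟩ := coset_compl_of_act_image δa h0 H hH w _ _ hw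
  have : c ∈ {x | x - c ∉ H} := hc ▸ Set.mem_univ c
  simp at this

lemma Hchain_mono {n : ℕ} (δa : ZMod n → ZMod n) : Monotone (Hchain δa) :=
  monotone_nat_of_le_succ fun _ _ hx =>
    AddSubgroup.subset_closure (Or.inl hx)

lemma exists_Hchain_eq_top {n : ℕ} [NeZero n] (δa : ZMod n → ZMod n)
    (h0 : ∀ q : ZMod n, δa q ≠ 0) (hcr : CompletelyReachable δa) :
    ∃ i, Hchain δa i = ⊤ := by
  by_contra! hne
  have hlt : ∀ i, Hchain δa i < Hchain δa (i + 1) := by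
    intro i
    refine lt_of_le_of_ne (Hchain_mono δa i.le_succ) fun heq => ?_
    refine hne i (eq_top_of_invariant δa h0 hcr _ fun x hx => ?_)
    by_contra hn
    have : δa x ∈ Hchain δa (i + 1) :=
      AddSubgroup.subset_closure (Or.inr ⟨⟨x, hx, rfl⟩, hn⟩)
    exact hn (heq ▸ this)
  exact not_injective_infinite_finite _ (strictMono_nat_of_lt_succ hlt).injective

/-- In a standardized completely reachable binary circular DFA, for every
nonempty proper subset `S`, with `t = t(S)`, `m = m(S)` and `U_t = δa(H_t) \ H_t`, there
exist an `H_t`-coset `C = H_t ⊕ c` and `u ∈ U_t` with `C ⊆ H_m \ S` and `C ⊕ u ⊆ H_m ∩ S`. -/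
theorem stmt3 {n : ℕ} [NeZero n] (δa : ZMod n → ZMod n)
    (hstd : Standardized δa) (hcr : CompletelyReachable δa)
    (S : Set (ZMod n)) (hne : S.Nonempty) (hprop : S ≠ Set.univ) :
    ∃ c u : ZMod n,
      u ∈ (δa '' (Hchain δa (tOf δa S) : Set (ZMod n))) \
        (Hchain δa (tOf δa S) : Set (ZMod n)) ∧
      (fun h => h + c) '' (Hchain δa (tOf δa S) : Set (ZMod n)) ⊆
        (Hchain δa (mOf δa S) : Set (ZMod n)) \ S ∧
      (fun h => h + c + u) '' (Hchain δa (tOf δa S) : Set (ZMod n)) ⊆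
        (Hchain δa (mOf δa S) : Set (ZMod n)) ∩ S := by
  obtain ⟨k, hk⟩ := exists_Hchain_eq_top δa hstd.1 hcr
  -- the infimum defining `m` is over a nonempty set, as an index with `H_k = ⊤` belongs to it
  have hm := Nat.sInf_mem (s := {i : ℕ | ((Hchain δa i : Set (ZMod n)) ∩ S).Nonempty ∧
    (Hchain δa i : Set (ZMod n)) ∩ S ≠ (Hchain δa i : Set (ZMod n))})
    ⟨k, by simpa [hk] using ⟨hne, hprop⟩⟩
  change ((Hchain δa (mOf δa S) : Set (ZMod n)) ∩ S).Nonempty ∧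
    (Hchain δa (mOf δa S) : Set (ZMod n)) ∩ S ≠ (Hchain δa (mOf δa S) : Set (ZMod n)) at hm
  have htdef : tOf δa S = sSup {i : ℕ | IsUnionOfCosets (Hchain δa i)
    ((Hchain δa (mOf δa S) : Set (ZMod n)) ∩ S)} := rfl
  generalize mOf δa S = m at *
  generalize tOf δa S = t at *
  obtain ⟨⟨s, hsH, hsS⟩, hm2⟩ := hm
  -- every index competing for `t` is below `m`, so the supremum defining `t` is attained
  have hlt : ∀ i, IsUnionOfCosets (Hchain δa i) ((Hchain δa m : Set (ZMod n)) ∩ S) → i < m := by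
    intro i hi
    by_contra! hle
    refine hm2 (Set.inter_eq_left.2 fun x hx => ?_)
    have := (hi s ⟨hsH, hsS⟩ (x - s) (Hchain_mono δa hle (sub_mem hx hsH))).2
    simpa using this
  have hbdd : BddAbove {i : ℕ | IsUnionOfCosets (Hchain δa i)
      ((Hchain δa m : Set (ZMod n)) ∩ S)} := ⟨m, fun i hi => (hlt i hi).le⟩
  have ht : IsUnionOfCosets (Hchain δa t) ((Hchain δa m : Set (ZMod n)) ∩ S) := by
    rw [htdef]
    refine Nat.sSup_mem ⟨0, ?_⟩ hbdd
    intro x hx h hh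
    have : h = 0 := by simpa [Hchain] using hh
    simpa [this] using hx
  have htm : t < m := hlt t ht
  have ht1 : ¬ IsUnionOfCosets (Hchain δa (t + 1)) ((Hchain δa m : Set (ZMod n)) ∩ S) := by
    intro h
    have := le_csSup hbdd h
    omega
  have hsucc : Hchain δa (t + 1) ≤ Hchain δa m := Hchain_mono δa htm
  obtain ⟨x, u, hu, hxm, hxS, hxuS⟩ : ∃ x u, u ∈ δa '' (Hchain δa t : Set (ZMod n)) \
      (Hchain δa t : Set (ZMod n)) ∧ x ∈ Hchain δa m ∧ x ∉ S ∧ x + u ∈ S := by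
    by_contra! hno
    apply ht1
    have key : ∀ g ∈ Hchain δa (t + 1), ∀ x ∈ Hchain δa m, x + g ∈ S → x ∈ S := by
      intro g hg
      -- in a finite group, closing the generators under addition already yields the subgroup
      rw [Hchain, ← AddSubgroup.mem_toAddSubmonoid,
        AddSubgroup.closure_toAddSubmonoid_of_finite] at hg
      have hle : AddSubmonoid.closure ((Hchain δa t : Set (ZMod n)) ∪
          (δa '' (Hchain δa t : Set (ZMod n)) \ (Hchain δa t : Set (ZMod n)))) ≤
          (Hchain δa m).toAddSubmonoid :=
        AddSubmonoid.closure_le.2 fun y hy => hsucc (AddSubgroup.subset_closure hy)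
      induction hg using AddSubmonoid.closure_induction with
      | mem y hy =>
        intro x hx hxy
        rcases hy with hy | hy
        · have := (ht (x + y) ⟨add_mem hx (Hchain_mono δa htm.le hy), hxy⟩ (-y) (neg_mem hy)).2
          simpa using this
        · by_contra hxS
          exact hno x y hy hx hxS hxy
      | zero => intro x _ h; simpa using h
      | add y z hy hz ihy ihz =>
        intro x hx h
        exact ihy x hx (ihz (x + y) (add_mem hx (hle hy)) (by rwa [add_assoc]))
    intro x hx h hh
    have hxh : x + h ∈ Hchain δa m := add_mem hx.1 (hsucc hh)
    exact ⟨hxh, key (-h) (neg_mem hh) _ hxh (by simpa using hx.2)⟩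
  have hum : u ∈ Hchain δa m := hsucc (AddSubgroup.subset_closure (Or.inr hu))
  refine ⟨x, u, hu, ?_, ?_⟩
  · rintro _ ⟨h, hh, rfl⟩
    have hmem : h + x ∈ Hchain δa m := add_mem (Hchain_mono δa htm.le hh) hxm
    refine ⟨hmem, fun hS => hxS ?_⟩
    have := (ht (h + x) ⟨hmem, hS⟩ (-h) (neg_mem hh)).2
    simpa using this
  · rintro _ ⟨h, hh, rfl⟩
    have := ht (x + u) ⟨add_mem hxm hum, hxuS⟩ h hh
    have he : h + x + u = x + u + h := by ring
    change h + x + u ∈ _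
    rwa [he]
end

section
/- Let 𝒜 be a standardized completely reachable binary circular DFA on ℤ_n with orbit subgroup K, and let S be a nonempty subset of ℤ_n. If there exists a K-coset C with S ∩ C ∉ {∅, C}, then there exist natural numbers s, t with s + t ≤ n such that the word a^s b^t expands S ∩ C. -/
/-- A word `w` expands a subset `S` if some strictly larger subset `R` satisfies `δ(R,w) = S`. -/
def Expands {n : ℕ} (δa : ZMod n → ZMod n) (w : List Letter) (S : Set (ZMod n)) : Prop :=
  ∃ R : Set (ZMod n), S.ncard < R.ncard ∧ act δa w '' R = S

/-- A subset `S` is `ℓ`-expandable if some word of length at most `ℓ` expands it. -/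
def Expandable {n : ℕ} (δa : ZMod n → ZMod n) (ℓ : ℕ) (S : Set (ZMod n)) : Prop :=
  ∃ w : List Letter, w.length ≤ ℓ ∧ Expands δa w S

theorem act_append {n : ℕ} (δa : ZMod n → ZMod n) (u v : List Letter) (q : ZMod n) :
    act δa (u ++ v) q = act δa v (act δa u q) := by
  induction u generalizing q with
  | nil => rfl
  | cons l u ih => cases l <;> simp [act, ih]

theorem act_replicate_a {n : ℕ} (δa : ZMod n → ZMod n) (s : ℕ) (q : ZMod n) :
    act δa (List.replicate s Letter.a) q = δa^[s] q := by
  induction s generalizing q with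
  | zero => rfl
  | succ s ih => simp [List.replicate_succ, act, ih]

theorem act_replicate_b {n : ℕ} (δa : ZMod n → ZMod n) (t : ℕ) (q : ZMod n) :
    act δa (List.replicate t Letter.b) q = q + t := by
  induction t generalizing q with
  | zero => simp [act]
  | succ t ih => simp [List.replicate_succ, act, ih]; ring

/-- A word acts as a surjection, or else it contains the letter `a`, and its rank is at most the
rank of `a`. -/
theorem act_surjective_or_ncard_le {n : ℕ} [NeZero n] (δa : ZMod n → ZMod n) (w : List Letter) :
    Set.range (act δa w) = Set.univ ∨ (Set.range (act δa w)).ncard ≤ (Set.range δa).ncard := by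
  induction w with
  | nil => left; exact Set.range_eq_univ.2 fun x => ⟨x, rfl⟩
  | cons l w ih =>
    cases l with
    | a =>
      right
      have : Set.range (act δa (Letter.a :: w)) = act δa w '' Set.range δa := by
        rw [← Set.range_comp]; rfl
      rw [this]
      exact Set.ncard_image_le (Set.toFinite _)
    | b =>
      have : Set.range (act δa (Letter.b :: w)) = Set.range (act δa w) :=
        (Equiv.addRight (1 : ZMod n)).surjective.range_comp (act δa w)
      rwa [this]

theorem range_eq_compl_zero {n : ℕ} [NeZero n] (δa : ZMod n → ZMod n)
    (hstd : Standardized δa) (hcr : CompletelyReachable δa) : Set.range δa = {0}ᶜ := by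
  obtain ⟨w, hw⟩ := hcr {0}ᶜ ⟨δa 0, hstd.1 0⟩
  rw [Set.image_univ] at hw
  have hsub : Set.range δa ⊆ {0}ᶜ := by
    rintro _ ⟨q, rfl⟩
    exact hstd.1 q
  refine Set.eq_of_subset_of_ncard_le hsub ?_ (Set.toFinite _)
  rcases act_surjective_or_ncard_le δa w with h | h
  · rw [hw] at h
    simp at h
  · rwa [hw] at h

/-- The collision at `δa 0` makes `0` redundant as a preimage. -/
theorem exists_ne_zero_preimage {n : ℕ} [NeZero n] (δa : ZMod n → ZMod n)
    (hstd : Standardized δa) (hcr : CompletelyReachable δa) (p : ZMod n) (hp : p ≠ 0) :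
    ∃ q, q ≠ 0 ∧ δa q = p := by
  have hmem : p ∈ Set.range δa := by
    rw [range_eq_compl_zero δa hstd hcr]; exact hp
  obtain ⟨q, hq⟩ := hmem
  by_cases h0 : q = 0
  · subst h0
    obtain ⟨r, hr, hr0⟩ := Set.exists_ne_of_one_lt_ncard ((hstd.2 p).2 hq.symm) 0
    exact ⟨r, hr0, hr⟩
  · exact ⟨q, h0, hq⟩

theorem exists_ne_zero_iterate_preimage {n : ℕ} [NeZero n] (δa : ZMod n → ZMod n)
    (hstd : Standardized δa) (hcr : CompletelyReachable δa) (s : ℕ) (p : ZMod n) (hp : p ≠ 0) :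
    ∃ q, q ≠ 0 ∧ δa^[s] q = p := by
  induction s generalizing p with
  | zero => exact ⟨p, hp, rfl⟩
  | succ s ih =>
    obtain ⟨r, hr, rfl⟩ := exists_ne_zero_preimage δa hstd hcr p hp
    obtain ⟨q, hq, rfl⟩ := ih r hr
    exact ⟨q, hq, Function.iterate_succ_apply' δa s q⟩

/-- For `s ≥ 1` the word `a^s b^t` misses only the state `t` and merges `0` with another state into
`δa^s(0) + t`; it expands any set avoiding the former and containing the latter. For `s = 0` the
hypotheses `ht` and `hs` contradict each other. -/
theorem expands_of_mem {n : ℕ} [NeZero n] (δa : ZMod n → ZMod n)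
    (hstd : Standardized δa) (hcr : CompletelyReachable δa) (T : Set (ZMod n)) (s t : ℕ)
    (ht : (t : ZMod n) ∉ T) (hs : (t : ZMod n) + δa^[s] 0 ∈ T) :
    Expands δa (List.replicate s Letter.a ++ List.replicate t Letter.b) T := by
  have hact : ∀ q, act δa (List.replicate s Letter.a ++ List.replicate t Letter.b) q
      = δa^[s] q + t := fun q => by rw [act_append, act_replicate_a, act_replicate_b]
  set f := act δa (List.replicate s Letter.a ++ List.replicate t Letter.b) with hf
  have hcover : T ⊆ f '' ((f ⁻¹' T) \ {0}) := by
    intro p hp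
    have hne : p - t ≠ 0 := fun h => ht (by rwa [← sub_eq_zero.1 h])
    obtain ⟨q, hq, hqp⟩ := exists_ne_zero_iterate_preimage δa hstd hcr s _ hne
    have hfq : f q = p := by rw [hact, hqp]; ring
    exact ⟨q, ⟨by simpa [hfq] using hp, hq⟩, hfq⟩
  refine ⟨f ⁻¹' T, ?_, ?_⟩
  · have h0 : (0 : ZMod n) ∈ f ⁻¹' T := by
      change f 0 ∈ T
      rw [hact, add_comm]; exact hs
    calc T.ncard ≤ (f '' ((f ⁻¹' T) \ {0})).ncard := Set.ncard_le_ncard hcover (Set.toFinite _)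
      _ ≤ ((f ⁻¹' T) \ {0}).ncard := Set.ncard_image_le (Set.toFinite _)
      _ < (f ⁻¹' T).ncard := Set.ncard_sdiff_singleton_lt_of_mem h0 (Set.toFinite _)
  · refine Set.Subset.antisymm (Set.image_preimage_subset f T) (hcover.trans ?_)
    exact Set.image_mono Set.sdiff_subset

/-- The least `s ≥ 1` at which the orbit leaves a subgroup `H` is at most `|H|`: an earlier
repetition would make the orbit periodic inside `H`. -/
theorem le_card_of_least {n : ℕ} [NeZero n] (δa : ZMod n → ZMod n) (h0 : ∀ q, δa q ≠ 0)
    (H : AddSubgroup (ZMod n)) (s : ℕ) (hs : δa^[s] 0 ∉ H)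
    (hlt : ∀ i, 1 ≤ i → i < s → δa^[i] 0 ∈ H) : s ≤ Nat.card H := by
  -- The exponent `0` supplies the element `0` of `H`, so all of `0, …, s - 1` can be used.
  have hmem : ∀ i, i < s → δa^[i] 0 ∈ H := by
    intro i hi
    rcases Nat.eq_zero_or_pos i with rfl | hpos
    · exact H.zero_mem
    · exact hlt i hpos hi
  have hne : ∀ i j, i < j → j < s → δa^[i] 0 ≠ δa^[j] 0 := by
    intro i j hij hj heq
    apply hs
    have hshift : δa^[s] 0 = δa^[s - j + i] 0 := by
      conv_lhs => rw [show s = (s - j) + j by omega, Function.iterate_add_apply, ← heq]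
      rw [Function.iterate_add_apply]
    rw [hshift]
    exact hmem _ (by omega)
  have hinj : Function.Injective (fun i : Fin s => (⟨δa^[i] 0, hmem i i.2⟩ : H)) := by
    intro i j hij
    have hij' : δa^[i] 0 = δa^[j] 0 := congrArg Subtype.val hij
    rcases lt_trichotomy i j with h | h | h
    · exact absurd hij' (hne i j h j.2)
    · exact h
    · exact absurd hij'.symm (hne j i h i.2)
  simpa using Nat.card_le_card_of_injective _ hinj

theorem exists_small_rep {n : ℕ} [NeZero n] (H : AddSubgroup (ZMod n)) (x : ZMod n) :
    ∃ t : ℕ, t < H.index ∧ x - t ∈ H := by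
  have hidx : H.index ≠ 0 := AddSubgroup.index_ne_zero_of_finite
  refine ⟨x.val % H.index, Nat.mod_lt _ (Nat.pos_of_ne_zero hidx), ?_⟩
  have h1 : H.index • (1 : ZMod n) ∈ H := H.nsmul_index_mem 1
  have h2 := H.nsmul_mem h1 (x.val / H.index)
  have h3 : x = ((x.val % H.index + H.index * (x.val / H.index) : ℕ) : ZMod n) := by
    rw [Nat.mod_add_div, ZMod.natCast_zmod_val]
  have h4 : x - ((x.val % H.index : ℕ) : ZMod n) = (x.val / H.index) • H.index • (1 : ZMod n) := by
    rw [sub_eq_iff_eq_add]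
    refine h3.trans ?_
    simp only [Nat.cast_add, Nat.cast_mul, nsmul_eq_mul, mul_one]
    ring
  rw [h4]
  exact h2

/-- The translation stabilizer of a set `T` of states. -/
def translationStabilizer {n : ℕ} (T : Set (ZMod n)) : AddSubgroup (ZMod n) where
  carrier := {k | ∀ x, x + k ∈ T ↔ x ∈ T}
  zero_mem' := by simp
  add_mem' := by
    intro k l hk hl x
    rw [← add_assoc, hl, hk]
  neg_mem' := by
    intro k hk x
    rw [← hk (x + -k), neg_add_cancel_right]

theorem exists_translate_mem {n : ℕ} [NeZero n] (T : Set (ZMod n)) (k : ZMod n)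
    (hk : k ∉ translationStabilizer T) : ∃ x, x ∉ T ∧ x + k ∈ T := by
  by_contra! hcon
  -- An inclusion between a finite set and its translate is an equality.
  have hsub : (fun x => x + k) ⁻¹' T ⊆ T := fun x hx => by
    by_contra hxT
    exact hcon x hxT hx
  have heq : (fun x => x + k) ⁻¹' T = T := by
    refine Set.eq_of_subset_of_ncard_le hsub (le_of_eq ?_) (Set.toFinite _)
    exact (Set.ncard_preimage_of_injective_subset_range (add_left_injective k)
      (fun y _ => ⟨y - k, sub_add_cancel y k⟩)).symm
  exact hk fun x => Set.ext_iff.1 heq x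

/-- In a standardized completely reachable binary circular DFA with orbit
subgroup `K`, if a `K`-coset `C = K ⊕ c` satisfies `S ∩ C ∉ {∅, C}`, then some word
`a^s b^t` with `s + t ≤ n` expands `S ∩ C`. -/
theorem stmt6 {n : ℕ} [NeZero n] (δa : ZMod n → ZMod n)
    (hstd : Standardized δa) (hcr : CompletelyReachable δa)
    (S : Set (ZMod n)) (hne : S.Nonempty) (c : ZMod n)
    (hC1 : (S ∩ ((fun k => k + c) '' (orbitSubgroup δa : Set (ZMod n)))).Nonempty)
    (hC2 : S ∩ ((fun k => k + c) '' (orbitSubgroup δa : Set (ZMod n))) ≠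
      (fun k => k + c) '' (orbitSubgroup δa : Set (ZMod n))) :
    ∃ s t : ℕ, s + t ≤ n ∧
      Expands δa (List.replicate s Letter.a ++ List.replicate t Letter.b)
        (S ∩ ((fun k => k + c) '' (orbitSubgroup δa : Set (ZMod n)))) := by
  set T := S ∩ ((fun k => k + c) '' (orbitSubgroup δa : Set (ZMod n))) with hT
  set H := translationStabilizer T with hH
  have hex : ∃ s, 1 ≤ s ∧ δa^[s] 0 ∉ H := by
    by_contra! hall
    have hKH : orbitSubgroup δa ≤ H := by
      refine (AddSubgroup.closure_le H).2 ?_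
      rintro _ ⟨i, hi, rfl⟩
      exact hall i hi
    apply hC2
    refine Set.Subset.antisymm Set.inter_subset_right ?_
    rintro _ ⟨k, hk, rfl⟩
    obtain ⟨x, hx⟩ := hC1
    obtain ⟨l, hl, hlx⟩ := hx.2
    have hmem := (hKH ((orbitSubgroup δa).sub_mem hk hl) x).2 hx
    have hxk : x + (k - l) = k + c := by rw [← hlx]; ring
    rwa [hxk] at hmem
  classical
  obtain ⟨hs1, hs⟩ := Nat.find_spec hex
  set s := Nat.find hex
  have hlt : ∀ i, 1 ≤ i → i < s → δa^[i] 0 ∈ H := by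
    intro i hi his
    by_contra hcon
    exact Nat.find_min hex his ⟨hi, hcon⟩
  have hcard : s ≤ Nat.card H := le_card_of_least δa hstd.1 H s hs hlt
  obtain ⟨x, hx, hxs⟩ := exists_translate_mem T _ hs
  obtain ⟨t, ht, htx⟩ := exists_small_rep H x
  refine ⟨s, t, ?_, expands_of_mem δa hstd hcr T s t ?_ ?_⟩
  · have hprod : Nat.card H * H.index = n := by
      rw [H.card_mul_index, Nat.card_zmod]
    have hpos : 1 ≤ Nat.card H := Nat.card_pos
    -- `|H| + [ℤ_n : H] ≤ n + 1`, as `(|H| - 1) ([ℤ_n : H] - 1) ≥ 0`.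
    nlinarith
  · intro h
    apply hx
    simpa using (htx t).2 h
  · have h := (htx (t + δa^[s] 0)).1
    apply h
    convert hxs using 1
    ring
end
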